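/- Let F be a field of characteristic p (possibly 0) with algebraic closure F̄, and let N ∈ ℕ. There exist constants C(N) and C'(N), depending only on N, with the following property. Let f ∈ F[t][x] be square-free as an element of F̄[t][x], and let a, b, c ∈ F[t] with gcd(a,b) = 1 and deg_x f, deg_t f, deg a, deg b, deg c ≤ N. Then there exists a polynomial P ∈ F[x₁, x₂] of total degree at most C'(N) such that every pair (β₁, β₂) ∈ F² for which f(t, a(t)β₁ + b(t)β₂ + c(t)) is not separable (as a polynomial in t) satisfies P(β₁, β₂) = 0. Moreover, P can be chosen nonzero whenever at least one of the following holds: (i) p = 0 or p > C(N); (ii) a ≠ 0 and b/a ∉ F(t^p). -/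

import Mathlib

/-- The condition that the rational function `b/a ∈ F(t)` does not lie in the subfield
`F(t^p)` generated over (the image of) `F` by `t^p`, where `p = ringChar F`. -/
def notInFtp (F : Type*) [Field F] (a b : Polynomial F) : Prop :=
  (algebraMap (Polynomial F) (RatFunc F)) b / (algebraMap (Polynomial F) (RatFunc F)) a ∉
    Subfield.closure (Set.range (RatFunc.C (K := F)) ∪ {RatFunc.X ^ ringChar F})

/-!
Write `A = a x₁ + b x₂ + c` for the generic member of the family, an element of `F[x₁, x₂][t]`, and
`G = f(t, A)`. The resultant of `G` and `∂G/∂t` vanishes wherever `G` specializes to an inseparable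
polynomial, and its degree is bounded by that of a Sylvester determinant, so the issue is whether
it is nonzero. Since `u a + v b = 1` for some `u, v`, the elements `A` and `z = u x₂ - v x₁` are
coordinates: over a perfect field `E` containing `F`, `E[x₁, x₂][t] = E[t][A][z]`. Hence `G` is
still square-free and its irreducible factors are `h(t, A)` with `h` irreducible, and by Gauss's
lemma the resultant can only vanish if some such factor of positive degree in `t` has `t`-derivative
zero. Characteristic `0` or larger than `deg_t G` forbids this. So does `a b' - a' b ≠ 0`, which
holds if `b / a ∉ F(t^p)`: because `∂A/∂t = α + (a b' - a' b) z` with `α ∈ E[t][A]`, comparing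
coefficients of `z` gives `∂h/∂x = ∂h/∂t = 0`, and `h` would be a `p`-th power.
-/

open Polynomial

section SeparabilityResultant

variable {R : Type*} [CommRing R]

/-- The resultant of `g` and its derivative, which vanishes at the specializations of `g` that
are not separable. The derivative is given the formal degree `g.natDegree + 1` so that the
Sylvester matrix is nonempty, and the resultant informative, even when `g` is constant. -/
noncomputable def separabilityResultant (g : R[X]) : R :=
  resultant g (derivative g) g.natDegree (g.natDegree + 1)

lemma separabilityResultant_map {S : Type*} [CommRing S] {φ : R →+* S}
    (hφ : Function.Injective φ) (g : R[X]) :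
    separabilityResultant (g.map φ) = φ (separabilityResultant g) := by
  rw [separabilityResultant, derivative_map, resultant_map_map,
    natDegree_map_eq_of_injective hφ, separabilityResultant]

lemma separable_map_of_isUnit_separabilityResultant {S : Type*} [CommRing S] {φ : R →+* S}
    {g : R[X]} (h : IsUnit (φ (separabilityResultant g))) : (g.map φ).Separable := by
  obtain ⟨p, q, -, -, hpq⟩ := exists_mul_add_mul_eq_C_resultant (n := g.natDegree + 1) g
    (derivative g) le_rfl ((natDegree_derivative_le g).trans (by lia)) (Or.inr (by lia))
  have hbezout : g.map φ * p.map φ + derivative (g.map φ) * q.map φ =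
      C (φ (separabilityResultant g)) := by
    simpa [separabilityResultant, derivative_map] using congrArg (Polynomial.map φ) hpq
  obtain ⟨r, hr⟩ := (isUnit_C.2 h).exists_left_inv
  exact ⟨r * p.map φ, r * q.map φ, by linear_combination r * hbezout + hr⟩

lemma separabilityResultant_ne_zero_of_separable [IsDomain R] {g : R[X]}
    (hg : g.Separable) : separabilityResultant g ≠ 0 := by
  obtain ⟨k, hk⟩ := Nat.exists_eq_add_of_le
    ((natDegree_derivative_le g).trans (by lia : g.natDegree - 1 ≤ g.natDegree + 1))
  rw [separabilityResultant, hk, resultant_add_right_deg _ _ _ _ _ le_rfl, coeff_natDegree]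
  exact mul_ne_zero (pow_ne_zero _ (leadingCoeff_ne_zero.2 hg.ne_zero)) (resultant_ne_zero _ _ hg)

variable [IsDomain R] [UniqueFactorizationMonoid R]

lemma exists_irreducible_dvd_associated_map {K : Type*} [Field K] [Algebra R K]
    [IsFractionRing R K] {p : R[X]} (hp : p ≠ 0) {z : K[X]} (hz : Irreducible z)
    (hdvd : z ∣ p.map (algebraMap R K)) :
    ∃ r : R[X], Irreducible r ∧ r ∣ p ∧ r.natDegree ≠ 0 ∧
      Associated (r.map (algebraMap R K)) z := by
  have hinj := IsFractionRing.injective R K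
  obtain ⟨s, hs, hsp⟩ := UniqueFactorizationMonoid.exists_prime_factors p hp
  have hzs : z ∣ (s.map (Polynomial.map (algebraMap R K))).prod := by
    rw [← coe_mapRingHom, ← map_multiset_prod, coe_mapRingHom]
    exact hdvd.trans (map_dvd (mapRingHom (algebraMap R K)) hsp.dvd')
  obtain ⟨r, hrs, hzr⟩ := hz.prime.exists_mem_multiset_map_dvd hzs
  have hr := (hs r hrs).irreducible
  have hdeg : r.natDegree ≠ 0 := by
    intro h0
    have hunit : IsUnit (r.map (algebraMap R K)) := by
      rw [isUnit_iff_degree_eq_zero, degree_map_eq_of_injective hinj,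
        degree_eq_natDegree hr.ne_zero, h0, Nat.cast_zero]
    exact hz.not_isUnit (isUnit_of_dvd_unit hzr hunit)
  have hrK := (hr.isPrimitive hdeg).irreducible_iff_irreducible_map_fraction_map (K := K) |>.1 hr
  exact ⟨r, hr, (Multiset.dvd_prod hrs).trans hsp.dvd, hdeg, (hz.associated_of_dvd hrK hzr).symm⟩

lemma isCoprime_map_of_forall_irreducible (K : Type*) [Field K] [Algebra R K]
    [IsFractionRing R K] {p q : R[X]} (hp : p ≠ 0)
    (h : ∀ r, Irreducible r → r ∣ p → r ∣ q → r.natDegree = 0) :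
    IsCoprime (p.map (algebraMap R K)) (q.map (algebraMap R K)) := by
  refine isCoprime_of_irreducible_dvd (fun h0 ↦ ?_) fun z hz hzp hzq ↦ ?_
  · exact hp ((Polynomial.map_eq_zero_iff (IsFractionRing.injective R K)).1 h0.1)
  · obtain ⟨r, hr, hrp, hdeg, hrz⟩ := exists_irreducible_dvd_associated_map hp hz hzp
    exact hdeg (h r hr hrp
      ((hr.isPrimitive hdeg).dvd_of_fraction_map_dvd_fraction_map (hrz.dvd.trans hzq)))

theorem separabilityResultant_ne_zero_of_squarefree {g : R[X]} (hg : Squarefree g)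
    (h : ∀ r, Irreducible r → r ∣ g → derivative r = 0 → r.natDegree = 0) :
    separabilityResultant g ≠ 0 := by
  let K := FractionRing R
  have hcop : IsCoprime (g.map (algebraMap R K)) ((derivative g).map (algebraMap R K)) := by
    refine isCoprime_map_of_forall_irreducible K hg.ne_zero ?_
    rintro r hr ⟨k, rfl⟩ hdvd
    rw [derivative_mul, dvd_add_left (dvd_mul_right _ _)] at hdvd
    have hrk : ¬ r ∣ k := fun hrk ↦
      hr.not_isUnit (IsRelPrime.of_squarefree_mul hg dvd_rfl hrk)
    exact h r hr (dvd_mul_right _ _)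
      (dvd_derivative_iff.1 ((hr.prime.dvd_or_dvd hdvd).resolve_right hrk))
  rw [← derivative_map] at hcop
  refine fun h0 ↦ separabilityResultant_ne_zero_of_separable hcop ?_
  rw [separabilityResultant_map (IsFractionRing.injective R K), h0, map_zero]

end SeparabilityResultant

section VanishingDerivative

lemma ringChar_dvd_of_derivative_eq_zero {R : Type*} [Semiring R] [NoZeroDivisors R] {f : R[X]}
    (hf : derivative f = 0) {n : ℕ} (hn : f.coeff n ≠ 0) : ringChar R ∣ n := by
  cases n with
  | zero => exact dvd_zero _
  | succ n =>
    have hcoeff : f.coeff (n + 1) * ((n + 1 : ℕ) : R) = 0 := by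
      simpa [coeff_derivative] using congrArg (coeff · n) hf
    exact ringChar.dvd ((mul_eq_zero.1 hcoeff).resolve_left hn)

lemma natDegree_eq_zero_of_derivative_eq_zero_of_lt_ringChar {R : Type*} [Semiring R]
    [NoZeroDivisors R] {f : R[X]} (hf : derivative f = 0)
    (hchar : ringChar R = 0 ∨ f.natDegree < ringChar R) : f.natDegree = 0 := by
  by_contra hdeg
  have hlead : f.leadingCoeff ≠ 0 := leadingCoeff_ne_zero.2 (ne_zero_of_natDegree_gt
    (Nat.pos_of_ne_zero hdeg))
  have hdvd := ringChar_dvd_of_derivative_eq_zero hf hlead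
  rcases hchar with h0 | hlt
  · exact hdeg (zero_dvd_iff.1 (h0 ▸ hdvd))
  · exact hdeg (Nat.eq_zero_of_dvd_of_lt hdvd hlt)

variable {F : Type*} [Field F]

lemma algebraMap_mem_closure_of_derivative_eq_zero {a : F[X]} (ha : derivative a = 0) :
    algebraMap F[X] (RatFunc F) a ∈
      Subfield.closure (Set.range (RatFunc.C (K := F)) ∪ {RatFunc.X ^ ringChar F}) := by
  rw [a.as_sum_support_C_mul_X_pow, map_sum]
  refine sum_mem fun n hn ↦ ?_
  obtain ⟨k, rfl⟩ := ringChar_dvd_of_derivative_eq_zero ha (mem_support_iff.1 hn)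
  rw [map_mul, map_pow, RatFunc.algebraMap_C, RatFunc.algebraMap_X, pow_mul]
  exact mul_mem (Subfield.subset_closure (.inl ⟨_, rfl⟩))
    (pow_mem (Subfield.subset_closure (.inr rfl)) k)

lemma wronskian_ne_zero_of_notInFtp {a b : F[X]} (hab : IsCoprime a b)
    (h : notInFtp F a b) : wronskian a b ≠ 0 := by
  intro hw
  obtain ⟨ha, hb⟩ := hab.wronskian_eq_zero_iff.1 hw
  exact h (div_mem (algebraMap_mem_closure_of_derivative_eq_zero hb)
    (algebraMap_mem_closure_of_derivative_eq_zero ha))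

lemma exists_pow_eq_of_derivative_eq_zero {R : Type*} [CommRing R] [IsDomain R] (p : ℕ)
    [hp : Fact p.Prime] [CharP R p] {f : R[X]} (hf : derivative f = 0)
    (hcoeff : ∀ i, ∃ z, z ^ p = f.coeff i) : ∃ g : R[X], g ^ p = f := by
  have hlift : contract p f ∈ lifts (frobenius R p) :=
    (lifts_iff_coeff_lifts _).2 fun n ↦ by
      rw [coeff_contract hp.out.ne_zero]
      exact hcoeff _
  obtain ⟨g, hg : g.map (frobenius R p) = contract p f⟩ := hlift
  exact ⟨g, by rw [← map_frobenius_expand, map_expand, hg, expand_contract p hf hp.out.ne_zero]⟩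

/-- The partial derivative `∂f/∂t` of `f ∈ R[t][x]`, taken coefficientwise; the other partial
derivative `∂f/∂x` is `Polynomial.derivative f`. -/
noncomputable def coeffDerivative {R : Type*} [CommRing R] (f : R[X][X]) : R[X][X] :=
  PolynomialModule.equivPolynomialSelf (derivative'.mapCoeffs f)

lemma coeff_coeffDerivative {R : Type*} [CommRing R] (f : R[X][X]) (i : ℕ) :
    (coeffDerivative f).coeff i = derivative (f.coeff i) := rfl

lemma coeffDerivative_add {R : Type*} [CommRing R] (f g : R[X][X]) :
    coeffDerivative (f + g) = coeffDerivative f + coeffDerivative g := by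
  simp [coeffDerivative]

lemma coeffDerivative_monomial {R : Type*} [CommRing R] (n : ℕ) (q : R[X]) :
    coeffDerivative (monomial n q) = monomial n (derivative q) := by
  ext1 i
  rw [coeff_coeffDerivative, coeff_monomial, coeff_monomial, apply_ite derivative, derivative_zero]

lemma derivative_ne_zero_or_coeffDerivative_ne_zero_of_irreducible {E : Type*} [Field E]
    [PerfectField E] {h : E[X][X]} (hh : Irreducible h) :
    derivative h ≠ 0 ∨ coeffDerivative h ≠ 0 := by
  by_contra! ⟨hx, ht⟩
  have hcoeff (i : ℕ) : derivative (h.coeff i) = 0 := by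
    rw [← coeff_coeffDerivative, ht, coeff_zero]
  obtain ⟨p, hp⟩ := ExpChar.exists E
  cases hp with
  | zero =>
    obtain ⟨q, rfl⟩ := natDegree_eq_zero.1 (derivative_eq_zero.1 hx)
    have hq : derivative q = 0 := by simpa only [coeff_C_zero] using hcoeff 0
    obtain ⟨e, rfl⟩ := natDegree_eq_zero.1 (derivative_eq_zero.1 hq)
    have he : e ≠ 0 := by simpa using hh.ne_zero
    exact hh.not_isUnit (by simpa using he)
  | prime hp =>
    have : Fact p.Prime := ⟨hp⟩
    have : PerfectRing E p := PerfectField.toPerfectRing p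
    obtain ⟨g, rfl⟩ := exists_pow_eq_of_derivative_eq_zero p hx fun i ↦
      exists_pow_eq_of_derivative_eq_zero p (hcoeff i) fun j ↦ surjective_frobenius E p _
    exact not_irreducible_pow hp.ne_one hh

end VanishingDerivative

section CoefficientDegree

variable {σ R : Type*} [CommRing R]

/-- All coefficients of `g`, a polynomial over a polynomial ring, have total degree at most `d`. -/
def CoeffDegreeLE (d : ℕ) (g : (MvPolynomial σ R)[X]) : Prop :=
  ∀ i, (g.coeff i).totalDegree ≤ d

namespace CoeffDegreeLE

variable {d e : ℕ} {g h : (MvPolynomial σ R)[X]}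

lemma mono (hg : CoeffDegreeLE d g) (hde : d ≤ e) : CoeffDegreeLE e g :=
  fun i ↦ (hg i).trans hde

lemma map_C (q : R[X]) : CoeffDegreeLE 0 (q.map (MvPolynomial.C (σ := σ))) := fun i ↦ by
  rw [coeff_map, MvPolynomial.totalDegree_C]

lemma C_X [Nontrivial R] (s : σ) : CoeffDegreeLE 1 (C (MvPolynomial.X s : MvPolynomial σ R)) :=
  fun i ↦ by
    rw [coeff_C]
    split_ifs <;> simp

lemma add (hg : CoeffDegreeLE d g) (hh : CoeffDegreeLE d h) : CoeffDegreeLE d (g + h) := fun i ↦ by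
  rw [coeff_add]
  exact (MvPolynomial.totalDegree_add _ _).trans (max_le (hg i) (hh i))

lemma sum {ι : Type*} {s : Finset ι} {g : ι → (MvPolynomial σ R)[X]}
    (hg : ∀ i ∈ s, CoeffDegreeLE d (g i)) : CoeffDegreeLE d (∑ i ∈ s, g i) := fun n ↦ by
  rw [finsetSum_coeff]
  exact MvPolynomial.totalDegree_finsetSum_le fun i hi ↦ hg i hi n

lemma mul (hg : CoeffDegreeLE d g) (hh : CoeffDegreeLE e h) : CoeffDegreeLE (d + e) (g * h) :=
  fun i ↦ by
    rw [coeff_mul]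
    exact MvPolynomial.totalDegree_finsetSum_le fun x _ ↦
      (MvPolynomial.totalDegree_mul _ _).trans (add_le_add (hg _) (hh _))

lemma pow (hg : CoeffDegreeLE d g) (n : ℕ) : CoeffDegreeLE (n * d) (g ^ n) := by
  induction n with
  | zero => simpa using map_C (σ := σ) (1 : R[X])
  | succ n ih =>
    rw [pow_succ, Nat.succ_mul]
    exact ih.mul hg

lemma derivative (hg : CoeffDegreeLE d g) : CoeffDegreeLE d (derivative g) := fun i ↦ by
  rw [coeff_derivative, ← Nat.cast_succ, mul_comm, ← nsmul_eq_mul]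
  exact (MvPolynomial.totalDegree_smul_le _ _).trans (hg _)

lemma totalDegree_resultant_le (hg : CoeffDegreeLE d g) (hh : CoeffDegreeLE e h) (m n : ℕ) :
    (resultant g h m n).totalDegree ≤ m * e + n * d := by
  rw [resultant, Matrix.det_apply]
  refine MvPolynomial.totalDegree_finsetSum_le fun τ _ ↦ ?_
  refine (MvPolynomial.totalDegree_smul_le _ _).trans ?_
  refine (MvPolynomial.totalDegree_finsetProd _ _).trans ?_
  rw [Fin.sum_univ_add]
  have hleft (i : Fin (m + n)) (j : Fin m) :
      (sylvester g h m n i (Fin.castAdd n j)).totalDegree ≤ e := by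
    simp only [sylvester, Matrix.of_apply, Fin.addCases_left]
    split_ifs <;> simp [hh _]
  have hright (i : Fin (m + n)) (j : Fin n) :
      (sylvester g h m n i (Fin.natAdd m j)).totalDegree ≤ d := by
    simp only [sylvester, Matrix.of_apply, Fin.addCases_right]
    split_ifs <;> simp [hg _]
  refine add_le_add ((Finset.sum_le_card_nsmul _ _ e fun j _ ↦ hleft _ j).trans ?_)
    ((Finset.sum_le_card_nsmul _ _ d fun j _ ↦ hright _ j).trans ?_) <;> simp

lemma totalDegree_separabilityResultant_le (hg : CoeffDegreeLE d g) :
    (separabilityResultant g).totalDegree ≤ (2 * g.natDegree + 1) * d :=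
  (hg.totalDegree_resultant_le hg.derivative _ _).trans_eq (by ring)

end CoeffDegreeLE

end CoefficientDegree

section Pencil

variable {R : Type*} [CommRing R]

/-- The generic member `a x₁ + b x₂ + c` of the family of polynomials `a β₁ + b β₂ + c` in `t`. The
parameters `x₁, x₂` are `MvPolynomial.X 0, MvPolynomial.X 1`. -/
noncomputable def pencil (a b c : R[X]) : (MvPolynomial (Fin 2) R)[X] :=
  a.map MvPolynomial.C * C (MvPolynomial.X 0) + b.map MvPolynomial.C * C (MvPolynomial.X 1) +
    c.map MvPolynomial.C

/-- The substitution `f(t, x) ↦ f(t, a x₁ + b x₂ + c)`, for `f ∈ R[t][x]`. -/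
noncomputable def substPencil (a b c : R[X]) : R[X][X] →+* (MvPolynomial (Fin 2) R)[X] :=
  eval₂RingHom (mapRingHom MvPolynomial.C) (pencil a b c)

variable {a b c : R[X]}

lemma substPencil_apply (f : R[X][X]) :
    substPencil a b c f = eval₂ (mapRingHom MvPolynomial.C) (pencil a b c) f := rfl

lemma map_pencil {S : Type*} [CommRing S] (φ : MvPolynomial (Fin 2) R →+* S) :
    (pencil a b c).map φ = a.map (φ.comp MvPolynomial.C) * C (φ (MvPolynomial.X 0)) +
      b.map (φ.comp MvPolynomial.C) * C (φ (MvPolynomial.X 1)) +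
      c.map (φ.comp MvPolynomial.C) := by
  simp [pencil, Polynomial.map_map]

lemma map_substPencil {S : Type*} [CommRing S] (φ : MvPolynomial (Fin 2) R →+* S) (f : R[X][X]) :
    (substPencil a b c f).map φ =
      eval₂ (mapRingHom (φ.comp MvPolynomial.C)) ((pencil a b c).map φ) f := by
  rw [substPencil_apply, ← coe_mapRingHom, hom_eval₂, mapRingHom_comp]

lemma substPencil_map {S : Type*} [CommRing S] (φ : R →+* S) (f : R[X][X]) :
    substPencil (a.map φ) (b.map φ) (c.map φ) (f.map (mapRingHom φ)) =
      (substPencil a b c f).map (MvPolynomial.map φ) := by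
  have hcomp : (MvPolynomial.map φ).comp MvPolynomial.C =
      (MvPolynomial.C (σ := Fin 2)).comp φ := RingHom.ext fun r ↦ MvPolynomial.map_C φ r
  rw [map_substPencil, map_pencil, hcomp, substPencil_apply, eval₂_map, mapRingHom_comp, pencil]
  simp only [Polynomial.map_map, MvPolynomial.map_X]

lemma substPencil_map_eval (β₁ β₂ : R) (f : R[X][X]) :
    (substPencil a b c f).map (MvPolynomial.eval ![β₁, β₂]) =
      eval (a * C β₁ + b * C β₂ + c) f := by
  have hcomp : (MvPolynomial.eval ![β₁, β₂]).comp MvPolynomial.C = RingHom.id R :=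
    RingHom.ext fun r ↦ MvPolynomial.eval_C r
  rw [map_substPencil, map_pencil, hcomp]
  simp [eval₂_id]

lemma derivative_substPencil (f : R[X][X]) :
    derivative (substPencil a b c f) = substPencil a b c (coeffDerivative f) +
      substPencil a b c (derivative f) * derivative (pencil a b c) := by
  induction f using Polynomial.induction_on' with
  | add f g hf hg =>
    simp only [map_add, coeffDerivative_add, hf, hg]
    ring
  | monomial n q =>
    simp only [substPencil_apply, coeffDerivative_monomial, derivative_monomial, eval₂_monomial,
      coe_mapRingHom, derivative_mul, derivative_map, derivative_pow, Polynomial.map_mul,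
      Polynomial.map_natCast, map_natCast]
    ring

lemma substPencil_C (q : R[X]) : substPencil a b c (C q) = q.map MvPolynomial.C := by
  simp [substPencil]

lemma substPencil_X : substPencil a b c X = pencil a b c := by
  simp [substPencil]

variable (a b c) in
/-- The extension of `substPencil a b c` to `R[t][A][z]` by `z ↦ u x₂ - v x₁`. -/
noncomputable def pencilHom (u v : R[X]) : R[X][X][X] →+* (MvPolynomial (Fin 2) R)[X] :=
  eval₂RingHom (substPencil a b c)
    (u.map MvPolynomial.C * C (MvPolynomial.X 1) - v.map MvPolynomial.C * C (MvPolynomial.X 0))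

variable (a b c) in
/-- The inverse of `pencilHom a b c u v` when `u a + v b = 1`, obtained by solving
`A = a x₁ + b x₂ + c`, `z = u x₂ - v x₁` for `x₁` and `x₂`. -/
noncomputable def pencilInv (u v : R[X]) : (MvPolynomial (Fin 2) R)[X] →+* R[X][X][X] :=
  eval₂RingHom
    (MvPolynomial.eval₂Hom (R := R) (S₁ := R[X][X][X]) (C.comp (C.comp C))
      ![C (C u * (X - C c)) - C (C b) * X, C (C v * (X - C c)) + C (C a) * X])
    (C (C X))

variable {u v : R[X]}

lemma pencilHom_C (f : R[X][X]) : pencilHom a b c u v (C f) = substPencil a b c f := by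
  simp [pencilHom]

lemma pencilHom_X : pencilHom a b c u v X = u.map MvPolynomial.C * C (MvPolynomial.X 1) -
    v.map MvPolynomial.C * C (MvPolynomial.X 0) := by
  simp [pencilHom]

lemma pencilInv_map_C (q : R[X]) :
    pencilInv a b c u v (q.map MvPolynomial.C) = C (C q) := by
  have hcomp : (pencilInv a b c u v).comp (mapRingHom MvPolynomial.C) = C.comp C := by
    refine ringHom_ext' (RingHom.ext fun r ↦ ?_) ?_ <;> simp [pencilInv]
  exact congr($hcomp q)

lemma pencilInv_C_X_zero : pencilInv a b c u v (C (MvPolynomial.X 0)) =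
    C (C u * (X - C c)) - C (C b) * X := by
  simp [pencilInv]

lemma pencilInv_C_X_one : pencilInv a b c u v (C (MvPolynomial.X 1)) =
    C (C v * (X - C c)) + C (C a) * X := by
  simp [pencilInv]

set_option maxSynthPendingDepth 3 in
lemma pencilInv_comp_pencilHom (huv : u * a + v * b = 1) :
    (pencilInv a b c u v).comp (pencilHom a b c u v) = RingHom.id _ := by
  have huvC : (C (C u) * C (C a) + C (C v) * C (C b) : R[X][X][X]) = 1 := by
    simp only [← map_mul, ← map_add, huv, map_one]
  refine ringHom_ext' (ringHom_ext' (RingHom.ext fun q ↦ ?_) ?_) ?_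
  · simp only [RingHom.comp_apply, pencilHom_C, substPencil_C, pencilInv_map_C, RingHom.id_apply]
  · simp only [RingHom.comp_apply, pencilHom_C, substPencil_X, pencil, map_add, map_mul,
      pencilInv_map_C, pencilInv_C_X_zero, pencilInv_C_X_one, map_sub, RingHom.id_apply]
    linear_combination (C X - C (C c)) * huvC
  · simp only [RingHom.comp_apply, pencilHom_X, map_sub, map_mul, pencilInv_map_C,
      pencilInv_C_X_zero, pencilInv_C_X_one, RingHom.id_apply]
    linear_combination (X : R[X][X][X]) * huvC

lemma bezout_map {S : Type*} [CommRing S] (φ : R →+* S) (huv : u * a + v * b = 1) :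
    u.map φ * a.map φ + v.map φ * b.map φ = 1 := by
  rw [← Polynomial.map_mul, ← Polynomial.map_mul, ← Polynomial.map_add, huv, Polynomial.map_one]

set_option maxSynthPendingDepth 3 in
lemma pencilHom_comp_pencilInv (huv : u * a + v * b = 1) :
    (pencilHom a b c u v).comp (pencilInv a b c u v) = RingHom.id _ := by
  have huvmap := bezout_map (MvPolynomial.C (σ := Fin 2)) huv
  refine ringHom_ext' (MvPolynomial.ringHom_ext (fun r ↦ ?_) fun i ↦ ?_) ?_
  · have hr : (C (MvPolynomial.C r) : (MvPolynomial (Fin 2) R)[X]) = (C r).map MvPolynomial.C :=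
      (map_C _).symm
    simp only [RingHom.comp_apply, hr, pencilInv_map_C, pencilHom_C, substPencil_C,
      RingHom.id_apply]
  · fin_cases i
    · simp only [Fin.zero_eta, RingHom.comp_apply, pencilInv_C_X_zero, map_sub, map_mul,
        pencilHom_C, pencilHom_X, substPencil_C, substPencil_X, pencil, RingHom.id_apply]
      linear_combination C (MvPolynomial.X 0) * huvmap
    · simp only [Fin.mk_one, RingHom.comp_apply, pencilInv_C_X_one, map_add, map_sub, map_mul,
        pencilHom_C, pencilHom_X, substPencil_C, substPencil_X, pencil, RingHom.id_apply]
      linear_combination C (MvPolynomial.X 1) * huvmap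
  · have hX : (X : (MvPolynomial (Fin 2) R)[X]) = (X : R[X]).map MvPolynomial.C := map_X _ |>.symm
    simp only [RingHom.comp_apply, hX, pencilInv_map_C, pencilHom_C, substPencil_C,
      RingHom.id_apply]

/-- When `u a + v b = 1`, substitution into the pencil extends to a coordinate change
`R[t][A][z] ≃ R[x₁, x₂][t]`. -/
noncomputable def pencilEquiv (c : R[X]) (huv : u * a + v * b = 1) :
    R[X][X][X] ≃+* (MvPolynomial (Fin 2) R)[X] :=
  RingEquiv.ofRingHom (pencilHom a b c u v) (pencilInv a b c u v)
    (pencilHom_comp_pencilInv huv) (pencilInv_comp_pencilHom huv)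

lemma pencilEquiv_C (huv : u * a + v * b = 1) (f : R[X][X]) :
    pencilEquiv c huv (C f) = substPencil a b c f :=
  pencilHom_C f

lemma pencilEquiv_X (huv : u * a + v * b = 1) : pencilEquiv c huv X =
    u.map MvPolynomial.C * C (MvPolynomial.X 1) - v.map MvPolynomial.C * C (MvPolynomial.X 0) :=
  pencilHom_X

lemma derivative_pencil (huv : u * a + v * b = 1) :
    derivative (pencil a b c) = pencilEquiv c huv
      (C (C (u * derivative a + v * derivative b) * (X - C c) + C (derivative c)) +
        C (C (wronskian a b)) * X) := by
  have huvmap := bezout_map (MvPolynomial.C (σ := Fin 2)) huv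
  simp only [map_add, map_sub, map_mul, pencilEquiv_C, pencilEquiv_X, substPencil_C,
    substPencil_X, pencil, derivative_mul, derivative_map, derivative_C, wronskian]
  linear_combination (-(derivative a).map MvPolynomial.C * C (MvPolynomial.X 0) -
    (derivative b).map MvPolynomial.C * C (MvPolynomial.X 1)) * huvmap

lemma substPencil_injective (hab : IsCoprime a b) :
    Function.Injective (substPencil a b c) := by
  obtain ⟨u, v, huv⟩ := hab
  intro f g hfg
  rw [← pencilEquiv_C huv, ← pencilEquiv_C huv] at hfg
  exact C_injective ((pencilEquiv c huv).injective hfg)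

lemma exists_substPencil_eq_of_dvd [IsDomain R] (hab : IsCoprime a b) {f : R[X][X]} (hf : f ≠ 0)
    {g : (MvPolynomial (Fin 2) R)[X]} (hg : g ∣ substPencil a b c f) :
    ∃ h, h ∣ f ∧ substPencil a b c h = g := by
  obtain ⟨u, v, huv⟩ := hab
  rw [← pencilEquiv_C huv] at hg
  obtain ⟨g, rfl⟩ := (pencilEquiv c huv).surjective g
  rw [map_dvd_iff] at hg
  have hdeg : g.natDegree = 0 := by
    simpa using natDegree_le_of_dvd hg (C_ne_zero.2 hf)
  obtain ⟨h, rfl⟩ := natDegree_eq_zero.1 hdeg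
  exact ⟨h, by simpa using (C_dvd_iff_dvd_coeff h _).1 hg 0, (pencilEquiv_C huv h).symm⟩

lemma isLocalHom_substPencil (hab : IsCoprime a b) : IsLocalHom (substPencil a b c) where
  map_nonunit f hf := by
    obtain ⟨u, v, huv⟩ := hab
    rw [← pencilEquiv_C huv, MulEquiv.isUnit_map] at hf
    exact isUnit_C.1 hf

lemma squarefree_substPencil [IsDomain R] (hab : IsCoprime a b) {f : R[X][X]} (hf : Squarefree f) :
    Squarefree (substPencil a b c f) := by
  intro g hg
  obtain ⟨h, -, rfl⟩ := exists_substPencil_eq_of_dvd hab hf.ne_zero (dvd_of_mul_left_dvd hg)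
  obtain ⟨k, hkf, hk⟩ := exists_substPencil_eq_of_dvd hab hf.ne_zero hg
  rw [← map_mul] at hk
  obtain rfl := substPencil_injective hab hk
  exact (hf h hkf).map _

lemma derivative_eq_zero_of_derivative_substPencil_eq_zero [IsDomain R] (hab : IsCoprime a b)
    (hw : wronskian a b ≠ 0) {f : R[X][X]} (hf : derivative (substPencil a b c f) = 0) :
    derivative f = 0 ∧ coeffDerivative f = 0 := by
  obtain ⟨u, v, huv⟩ := hab
  rw [derivative_substPencil, derivative_pencil huv, ← pencilEquiv_C huv, ← pencilEquiv_C huv,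
    ← map_mul, ← map_add, map_eq_zero_iff _ (pencilEquiv c huv).injective] at hf
  have hx : derivative f = 0 := by
    have hcoeff := congr(coeff $hf 1)
    simp only [mul_add, ← mul_assoc, ← C_mul, coeff_add, coeff_C_mul_X, coeff_C] at hcoeff
    simpa [hw] using hcoeff
  exact ⟨hx, by simpa [hx] using hf⟩

variable {f : R[X][X]} {d m n : ℕ}

lemma coeffDegreeLE_pencil [Nontrivial R] : CoeffDegreeLE 1 (pencil a b c) := by
  have hterm (q : R[X]) (i : Fin 2) :
      CoeffDegreeLE 1 (q.map MvPolynomial.C * C (MvPolynomial.X i)) := by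
    simpa only [zero_add] using (CoeffDegreeLE.map_C q).mul (.C_X i)
  exact ((hterm a 0).add (hterm b 1)).add ((CoeffDegreeLE.map_C c).mono zero_le_one)

lemma coeffDegreeLE_substPencil [Nontrivial R] (hn : f.natDegree ≤ n) :
    CoeffDegreeLE n (substPencil a b c f) := by
  rw [substPencil_apply, eval₂_eq_sum_range]
  refine .sum fun i hi ↦ ((CoeffDegreeLE.map_C _).mul (coeffDegreeLE_pencil.pow i)).mono ?_
  have := Finset.mem_range.1 hi
  lia

lemma natDegree_pencil_le (ha : a.natDegree ≤ d) (hb : b.natDegree ≤ d) (hc : c.natDegree ≤ d) :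
    (pencil a b c).natDegree ≤ d := by
  refine natDegree_add_le_of_degree_le (natDegree_add_le_of_degree_le ?_ ?_)
    (natDegree_map_le.trans hc)
  · exact (natDegree_mul_C_le _ _).trans (natDegree_map_le.trans ha)
  · exact (natDegree_mul_C_le _ _).trans (natDegree_map_le.trans hb)

lemma natDegree_substPencil_le (hn : f.natDegree ≤ n) (hm : ∀ i, (f.coeff i).natDegree ≤ m)
    (hd : (pencil a b c).natDegree ≤ d) :
    (substPencil a b c f).natDegree ≤ m + n * d := by
  rw [substPencil_apply, eval₂_eq_sum_range]
  refine natDegree_sum_le_of_forall_le _ _ fun i hi ↦ ?_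
  have hin : i ≤ n := (Finset.mem_range_succ_iff.1 hi).trans hn
  exact natDegree_mul_le.trans (add_le_add (natDegree_map_le.trans (hm i))
    (natDegree_pow_le.trans (Nat.mul_le_mul hin hd)))

end Pencil

theorem separabilityResultant_substPencil_ne_zero {E : Type*} [Field E] [PerfectField E]
    {a b c : E[X]} {f : E[X][X]} (hab : IsCoprime a b) (hf : Squarefree f)
    (h : (ringChar E = 0 ∨ (substPencil a b c f).natDegree < ringChar E) ∨ wronskian a b ≠ 0) :
    separabilityResultant (substPencil a b c f) ≠ 0 := by
  have hG := squarefree_substPencil (c := c) hab hf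
  refine separabilityResultant_ne_zero_of_squarefree hG fun r hr hrG hr' ↦ ?_
  rcases h with hchar | hw
  · rw [Algebra.ringChar_eq E (MvPolynomial (Fin 2) E)] at hchar
    exact natDegree_eq_zero_of_derivative_eq_zero_of_lt_ringChar hr'
      (hchar.imp_right (natDegree_le_of_dvd hrG hG.ne_zero).trans_lt)
  · obtain ⟨h, -, rfl⟩ := exists_substPencil_eq_of_dvd hab hf.ne_zero hrG
    have := isLocalHom_substPencil (c := c) hab
    obtain ⟨hx, ht⟩ := derivative_eq_zero_of_derivative_substPencil_eq_zero hab hw hr'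
    rcases derivative_ne_zero_or_coeffDerivative_ne_zero_of_irreducible hr.of_map with hne | hne
    exacts [absurd hx hne, absurd ht hne]

theorem exists_discriminant_poly_univariate_general {F E : Type*} [Field F] [Field E]
    [PerfectField E] [Algebra F E] {f : F[X][X]} {a b c : F[X]} {d m n : ℕ}
    (hf : Squarefree (f.map (mapRingHom (algebraMap F E)))) (hab : IsCoprime a b)
    (hn : f.natDegree ≤ n) (hm : ∀ i, (f.coeff i).natDegree ≤ m)
    (ha : a.natDegree ≤ d) (hb : b.natDegree ≤ d) (hc : c.natDegree ≤ d) :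
    ∃ P : MvPolynomial (Fin 2) F, P.totalDegree ≤ (2 * (m + n * d) + 1) * n ∧
      (∀ β₁ β₂ : F, ¬ (eval (a * C β₁ + b * C β₂ + c) f).Separable →
        MvPolynomial.eval ![β₁, β₂] P = 0) ∧
      ((ringChar F = 0 ∨ m + n * d < ringChar F) ∨ notInFtp F a b → P ≠ 0) := by
  have hdeg := natDegree_substPencil_le hn hm (natDegree_pencil_le ha hb hc)
  refine ⟨separabilityResultant (substPencil a b c f), ?_, fun β₁ β₂ hsep ↦ ?_, fun h hP ↦ ?_⟩
  · exact (coeffDegreeLE_substPencil hn).totalDegree_separabilityResultant_le.trans (by gcongr)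
  · rw [← substPencil_map_eval] at hsep
    by_contra hP
    exact hsep (separable_map_of_isUnit_separabilityResultant (IsUnit.mk0 _ hP))
  · let φ := algebraMap F E
    have hφ : Function.Injective (MvPolynomial.map (σ := Fin 2) φ) :=
      MvPolynomial.map_injective φ φ.injective
    refine separabilityResultant_substPencil_ne_zero (a := a.map φ) (b := b.map φ) (c := c.map φ)
      (hab.map (mapRingHom φ)) hf ?_ ?_
    · have hw : wronskian (a.map φ) (b.map φ) = (wronskian a b).map φ := by
        simp only [wronskian, derivative_map, Polynomial.map_sub, Polynomial.map_mul]
      refine h.imp (fun hchar ↦ ?_) fun hF ↦ ?_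
      · rw [← Algebra.ringChar_eq F E, substPencil_map, natDegree_map_eq_of_injective hφ]
        exact hchar.imp_right hdeg.trans_lt
      · rw [hw, Polynomial.map_ne_zero_iff φ.injective]
        exact wronskian_ne_zero_of_notInFtp hab hF
    · rw [substPencil_map, separabilityResultant_map hφ, hP, map_zero]

/-- For every `N` there are constants `C N`, `C' N` such that for any field
`F` of characteristic `p`, any `f ∈ F[t][x]` square-free over the algebraic closure `F̄` with
`deg_x f, deg_t f ≤ N`, and any `a, b, c ∈ F[t]` of degree at most `N` with `gcd(a,b) = 1`,
there is a polynomial `P ∈ F[x₁,x₂]` of total degree at most `C' N` vanishing at every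
`(β₁,β₂)` for which `f(t, a(t)β₁ + b(t)β₂ + c(t))` is not separable; moreover `P` can be
chosen nonzero whenever `p = 0` or `p > C N`, or `a ≠ 0` and `b/a ∉ F(t^p)`. -/
theorem exists_discriminant_poly_univariate (N : ℕ) :
    ∃ C C' : ℕ, ∀ (F : Type) [Field F],
      ∀ (f : Polynomial (Polynomial F)) (a b c : Polynomial F),
        Squarefree
          (Polynomial.map (Polynomial.mapRingHom (algebraMap F (AlgebraicClosure F))) f) →
        IsRelPrime a b →
        f.natDegree ≤ N → (∀ i, (f.coeff i).natDegree ≤ N) →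
        a.natDegree ≤ N → b.natDegree ≤ N → c.natDegree ≤ N →
        ∃ P : MvPolynomial (Fin 2) F,
          P.totalDegree ≤ C' ∧
          (∀ β₁ β₂ : F,
            ¬ (Polynomial.eval (a * Polynomial.C β₁ + b * Polynomial.C β₂ + c) f).Separable →
            MvPolynomial.eval ![β₁, β₂] P = 0) ∧
          (((ringChar F = 0 ∨ C < ringChar F) ∨ (a ≠ 0 ∧ notInFtp F a b)) → P ≠ 0) := by
  refine ⟨N + N * N, (2 * (N + N * N) + 1) * N, fun F _ f a b c hf hab hn hm ha hb hc ↦ ?_⟩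
  obtain ⟨P, hdeg, hvanish, hP⟩ :=
    exists_discriminant_poly_univariate_general hf hab.isCoprime hn hm ha hb hc
  exact ⟨P, hdeg, hvanish, fun h ↦ hP (h.imp_right And.right)⟩
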